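/- arXiv:math/0305352 — 4 statements merged into one kernel-verified Lean document; each statement's English description precedes it below -/
import Mathlib

section
/- Let {G_i}_{i∈I} be a family of sofic groups (over an arbitrary index set I). Then the direct product G = ∏_{i∈I} G_i is sofic. -/
/-- Two self-maps of a finite set `A` are `ε`-similar if the number of points where they
differ is at most `ε·|A|`. They are `(1-ε)`-different if they are not `(1-ε)`-similar. -/
def EpsSimilar {A : Type*} [Fintype A] (ε : ℝ) (e f : A → A) : Prop :=
  (Nat.card {a : A // e a ≠ f a} : ℝ) ≤ ε * Fintype.card A

/-- An `(F, ε)`-quasi-action of a group `G` on a finite set `A`: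
(a) `φ(ef)` is `ε`-similar to `φ(e)` followed by `φ(f)` for `e, f ∈ F`;
(b) `φ(1)` is `ε`-similar to the identity;
(c) for `1 ≠ e ∈ F`, `φ(e)` is `(1-ε)`-different from the identity. -/
def IsQuasiAction {G : Type*} [Group G] (F : Finset G) (ε : ℝ)
    {A : Type*} [Fintype A] (φ : G → A → A) : Prop :=
  (∀ e ∈ F, ∀ f ∈ F, EpsSimilar ε (φ (e * f)) (fun a => φ f (φ e a))) ∧
  EpsSimilar ε (φ 1) id ∧
  (∀ e ∈ F, e ≠ 1 → ¬ EpsSimilar (1 - ε) (φ e) id)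

/-- A group `G` is sofic if for every finite subset `F ⊆ G` and every `ε ∈ (0,1)` there is an
`(F, ε)`-quasi-action of `G` on some finite nonempty set. -/
def IsSofic (G : Type*) [Group G] : Prop :=
  ∀ (F : Finset G) (ε : ℝ), 0 < ε → ε < 1 →
    ∃ (A : Type) (_ : Fintype A) (_ : Nonempty A) (φ : G → A → A),
      IsQuasiAction F ε φ

/-!
To see that a subgroup `H` of `∏ i, G i` is sofic it suffices to look at finitely many coordinates:
one witnessing `g ≠ 1` for each nontrivial `g` in the given finite set `F ⊆ H`. Take a quasi-action
of `G j` on a finite set `A j` for each of these `j`, and let `H` act coordinatewise on `∏ j, A j`.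
Since evaluation at `j` carries the uniform distribution on `∏ j, A j` to that on `A j`, the error
probabilities of the coordinates at most add up, while an element moving almost every point of one
`A j` moves almost every point of the product.
-/

section Density

open Finset

variable {J : Type*}

theorem dens_biUnion_le {A : Type*} [Fintype A] [DecidableEq A] (s : Finset J)
    (t : J → Finset A) : (s.biUnion t).dens ≤ ∑ j ∈ s, (t j).dens := by
  simp only [dens, ← sum_div]
  gcongr
  exact_mod_cast card_biUnion_le

variable [Fintype J] [DecidableEq J] {A : J → Type*} [∀ j, Fintype (A j)]

theorem dens_piFinset (s : ∀ j, Finset (A j)) :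
    (Fintype.piFinset s).dens = ∏ j, (s j).dens := by
  simp [dens, prod_div_distrib]

theorem dens_filter_eval_mem [∀ j, Nonempty (A j)] (j : J) [DecidableEq (A j)]
    (s : Finset (A j)) : ({a | a j ∈ s} : Finset (∀ j, A j)).dens = s.dens := by
  have cylinder_eq : ({a | a j ∈ s} : Finset (∀ j, A j)) =
      Fintype.piFinset (Function.update (fun _ ↦ univ) j s) := by
    grind
  have dens_eq_one : ∀ k ∈ univ.erase j, (Function.update (fun _ ↦ univ) j s k).dens = 1 :=
    fun k hk ↦ by rw [Function.update_of_ne (ne_of_mem_erase hk), dens_univ]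
  rw [cylinder_eq, dens_piFinset, ← mul_prod_erase univ _ (mem_univ j), Function.update_self,
    prod_eq_one dens_eq_one, mul_one]

end Density

section Disagreement

open Finset

open scoped Classical in
/-- The set of points at which two maps on a finite set differ. Its density is the normalized
Hamming distance of the maps, which `EpsSimilar ε` bounds by `ε`. -/
noncomputable def disagreement {A B : Type*} [Fintype A] (e f : A → B) : Finset A :=
  {a | e a ≠ f a}

theorem mem_disagreement {A B : Type*} [Fintype A] {e f : A → B} {a : A} :
    a ∈ disagreement e f ↔ e a ≠ f a := by
  simp [disagreement]

theorem epsSimilar_iff_dens_disagreement_le {A : Type*} [Fintype A] [Nonempty A] {ε : ℝ}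
    {e f : A → A} : EpsSimilar ε e f ↔ ((disagreement e f).dens : ℝ) ≤ ε := by
  have card_eq : Nat.card {a // e a ≠ f a} = #(disagreement e f) :=
    Nat.subtype_card _ fun _ ↦ mem_disagreement
  rw [EpsSimilar, card_eq, nnratCast_dens, div_le_iff₀ (by exact_mod_cast Fintype.card_pos)]

variable {J : Type*} [Fintype J] [DecidableEq J] {A B : J → Type*} [∀ j, Fintype (A j)]
  [∀ j, Nonempty (A j)] (e f : ∀ j, A j → B j)

theorem dens_disagreement_piMap_le :
    (disagreement (Pi.map e) (Pi.map f)).dens ≤ ∑ j, (disagreement (e j) (f j)).dens := by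
  classical
  have disagreement_eq : disagreement (Pi.map e) (Pi.map f) =
      univ.biUnion fun j ↦ {a | a j ∈ disagreement (e j) (f j)} := by
    ext a
    simp [mem_disagreement, Function.ne_iff]
  calc (disagreement (Pi.map e) (Pi.map f)).dens
      ≤ ∑ j, ({a | a j ∈ disagreement (e j) (f j)} : Finset (∀ j, A j)).dens :=
        disagreement_eq ▸ dens_biUnion_le _ _
    _ = ∑ j, (disagreement (e j) (f j)).dens :=
        sum_congr rfl fun j _ ↦ dens_filter_eval_mem j _

theorem dens_disagreement_le_piMap (j : J) :
    (disagreement (e j) (f j)).dens ≤ (disagreement (Pi.map e) (Pi.map f)).dens := by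
  classical
  rw [← dens_filter_eval_mem j (disagreement (e j) (f j))]
  refine dens_le_dens fun a ha ↦ mem_disagreement.2 fun hmap ↦ ?_
  exact mem_disagreement.1 (mem_filter.1 ha).2 (congrFun hmap j)

end Disagreement

namespace EpsSimilar

section

variable {A : Type*} [Fintype A] {δ ε : ℝ} {e f : A → A}

theorem mono (h : EpsSimilar δ e f) (hδε : δ ≤ ε) : EpsSimilar ε e f :=
  h.trans (by gcongr)

theorem nonneg [Nonempty A] (h : EpsSimilar ε e f) : 0 ≤ ε :=
  (NNRat.cast_nonneg _).trans (epsSimilar_iff_dens_disagreement_le.1 h)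

end

variable {J : Type*} [Fintype J] [DecidableEq J] {A : J → Type*} [∀ j, Fintype (A j)]
  [∀ j, Nonempty (A j)] {e f : ∀ j, A j → A j}

theorem piMap {ε : J → ℝ} (h : ∀ j, EpsSimilar (ε j) (e j) (f j)) :
    EpsSimilar (∑ j, ε j) (Pi.map e) (Pi.map f) := by
  rw [epsSimilar_iff_dens_disagreement_le]
  calc ((disagreement (Pi.map e) (Pi.map f)).dens : ℝ)
      ≤ ∑ j, ((disagreement (e j) (f j)).dens : ℝ) := by
        exact_mod_cast dens_disagreement_piMap_le e f
    _ ≤ ∑ j, ε j := Finset.sum_le_sum fun j _ ↦ epsSimilar_iff_dens_disagreement_le.1 (h j)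

theorem of_piMap {ε : ℝ} (h : EpsSimilar ε (Pi.map e) (Pi.map f)) (j : J) :
    EpsSimilar ε (e j) (f j) := by
  rw [epsSimilar_iff_dens_disagreement_le] at h ⊢
  exact le_trans (by exact_mod_cast dens_disagreement_le_piMap e f j) h

end EpsSimilar

namespace IsQuasiAction

theorem mono {G A : Type*} [Group G] [Fintype A] {F : Finset G} {δ ε : ℝ} {φ : G → A → A}
    (h : IsQuasiAction F δ φ) (hδε : δ ≤ ε) : IsQuasiAction F ε φ :=
  ⟨fun e he f hf ↦ (h.1 e he f hf).mono hδε, h.2.1.mono hδε,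
    fun e he hne hsim ↦ h.2.2 e he hne (hsim.mono (by linarith))⟩

theorem piMap {J H : Type*} [Fintype J] [DecidableEq J] [Group H] {G : J → Type*}
    [∀ j, Group (G j)] [∀ j, DecidableEq (G j)] {A : J → Type*} [∀ j, Fintype (A j)]
    [∀ j, Nonempty (A j)] {F : Finset H} {ε : J → ℝ} {φ : ∀ j, G j → A j → A j}
    (π : ∀ j, H →* G j) (hφ : ∀ j, IsQuasiAction (F.image (π j)) (ε j) (φ j))
    (hπ : ∀ g ∈ F, g ≠ 1 → ∃ j, π j g ≠ 1) :
    IsQuasiAction F (∑ j, ε j) fun g ↦ Pi.map fun j ↦ φ j (π j g) := by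
  refine ⟨fun g hg h hh ↦ ?_, ?_, fun g hg hne hsim ↦ ?_⟩
  · refine EpsSimilar.piMap (f := fun j ↦ φ j (π j h) ∘ φ j (π j g)) fun j ↦ ?_
    rw [map_mul]
    exact (hφ j).1 _ (Finset.mem_image_of_mem _ hg) _ (Finset.mem_image_of_mem _ hh)
  · refine EpsSimilar.piMap (f := fun _ ↦ id) fun j ↦ ?_
    rw [map_one]
    exact (hφ j).2.1
  · obtain ⟨j, hj⟩ := hπ g hg hne
    have hε : ε j ≤ ∑ k, ε k :=
      Finset.single_le_sum (fun k _ ↦ (hφ k).2.1.nonneg) (Finset.mem_univ j)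
    have hsim_j : EpsSimilar (1 - ∑ k, ε k) (φ j (π j g)) id :=
      EpsSimilar.of_piMap (f := fun _ ↦ id) hsim j
    exact (hφ j).2.2 _ (Finset.mem_image_of_mem _ hg) hj (hsim_j.mono (by linarith))

end IsQuasiAction

theorem exists_fin_eval_ne_of_injective {I X : Type*} {Y : I → Type*} {f : X → ∀ i, Y i}
    (hf : Function.Injective f) (x₀ : X) (F : Finset X) :
    ∃ (n : ℕ) (idx : Fin n → I), ∀ x ∈ F, x ≠ x₀ → ∃ k, f x (idx k) ≠ f x₀ (idx k) := by
  classical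
  have exists_coord (x : F.erase x₀) : ∃ i, f x i ≠ f x₀ i :=
    Function.ne_iff.1 (hf.ne (Finset.ne_of_mem_erase x.2))
  choose coord hcoord using exists_coord
  let enum := (F.erase x₀).equivFin
  refine ⟨_, coord ∘ enum.symm, fun x hx hne ↦ ?_⟩
  let x' : F.erase x₀ := ⟨x, Finset.mem_erase.2 ⟨hne, hx⟩⟩
  refine ⟨enum x', ?_⟩
  rw [Function.comp_apply, enum.symm_apply_apply]
  exact hcoord x'

theorem isSofic_pi_general {I H : Type*} [Group H] (G : I → Type*) [∀ i, Group (G i)]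
    (π : H →* ∀ i, G i) (hπ : Function.Injective π) (h : ∀ i, IsSofic (G i)) : IsSofic H := by
  classical
  intro F ε hε hε_lt_one
  obtain ⟨n, idx, hidx⟩ := exists_fin_eval_ne_of_injective hπ 1 F
  simp only [map_one, Pi.one_apply] at hidx
  let δ : ℝ := ε / (n + 1)
  have hδ : 0 < δ := by positivity
  have hδ_lt_one : δ < 1 := (div_le_self hε.le (by simp)).trans_lt hε_lt_one
  have sum_δ_le : ∑ _k : Fin n, δ ≤ ε := by
    have : (n + 1) * δ = ε := mul_div_cancel₀ ε (by positivity)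
    simp only [Finset.sum_const, Finset.card_univ, Fintype.card_fin, nsmul_eq_mul]
    linarith
  let coord (k : Fin n) : H →* G (idx k) := (Pi.evalMonoidHom G (idx k)).comp π
  choose A _ _ φ hφ using fun k ↦ h (idx k) (F.image (coord k)) δ hδ hδ_lt_one
  exact ⟨∀ k, A k, inferInstance, inferInstance, _,
    (IsQuasiAction.piMap coord hφ hidx).mono sum_δ_le⟩

/-- The direct product of an arbitrary family of sofic groups is sofic. -/
theorem isSofic_pi {I : Type*} (G : I → Type*) [∀ i, Group (G i)]
    (h : ∀ i, IsSofic (G i)) : IsSofic (∀ i, G i) :=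
  isSofic_pi_general G (MonoidHom.id _) Function.injective_id h
end

section
/- Let {G_i}_{i∈I} be an arbitrary family of sofic groups. Then their free product (the coproduct ∗_{i∈I} G_i in the category of groups) is sofic. -/
/-!
A group is sofic if and only if it has asymptotically multiplicative and asymptotically free maps
to finite symmetric groups. Let all `G i` act in this way on a common finite set `A`. Conjugate the
action of `G i` on the first factor of `A × Q` by the shear `(a, q) ↦ (a, x_{i,a} q)`, where `Q` is
a finite quotient of the free group on the symbols `x_{i,a}`. A letter from `G i` that moves `a` to
`b` now multiplies the second coordinate by `x_{i,b}⁻¹ x_{i,a}`. Along a reduced word of the free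
product, these factors multiply to a reduced word in the symbols, as soon as each letter moves the
point it is applied to, which happens almost everywhere. Free groups being residually finite, `Q`
can be chosen so that this product is nontrivial in `Q`, and so every nonempty reduced word moves
almost every point. Multiplicativity on the free product follows from that on each `G i`, since
asymptotic equality is a congruence on the free monoid of words.
-/

open Equiv Filter Topology

theorem dens_product_univ {α β : Type*} [Fintype α] [Fintype β] [Nonempty β] (s : Finset α) :
    (s ×ˢ (Finset.univ : Finset β)).dens = s.dens := by
  rw [Finset.dens, Finset.dens, Finset.card_product, Fintype.card_prod, Finset.card_univ,
    Nat.cast_mul, Nat.cast_mul, mul_div_mul_right _ _ (by exact_mod_cast Fintype.card_ne_zero)]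

section RelHammingDist

variable {A B C : Type*}

open Classical in
/-- The relative Hamming distance of two maps on a finite set: the proportion of points at which
they differ. With it, soficity becomes a statement about limits of distances. -/
noncomputable def relHammingDist [Fintype A] (f g : A → B) : ℝ :=
  hammingDist f g / Fintype.card A

section

variable [Fintype A]

theorem relHammingDist_nonneg (f g : A → B) : 0 ≤ relHammingDist f g := by
  unfold relHammingDist; positivity

theorem relHammingDist_le_one (f g : A → B) : relHammingDist f g ≤ 1 := by
  classical
  exact div_le_one_of_le₀ (by exact_mod_cast hammingDist_le_card_fintype) (Nat.cast_nonneg _)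

@[simp]
theorem relHammingDist_self (f : A → B) : relHammingDist f f = 0 := by
  simp [relHammingDist]

theorem relHammingDist_comm (f g : A → B) : relHammingDist f g = relHammingDist g f := by
  simp only [relHammingDist, hammingDist_comm]

theorem relHammingDist_triangle (f g h : A → B) :
    relHammingDist f h ≤ relHammingDist f g + relHammingDist g h := by
  classical
  rw [relHammingDist, relHammingDist, relHammingDist, ← add_div]
  gcongr
  exact_mod_cast hammingDist_triangle f g h

theorem relHammingDist_comp_left_le (h : B → C) (f g : A → B) :
    relHammingDist (h ∘ f) (h ∘ g) ≤ relHammingDist f g := by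
  classical
  unfold relHammingDist
  gcongr
  exact hammingDist_comp_le_hammingDist fun _ => h

theorem relHammingDist_comp_left {h : B → C} (hh : h.Injective) (f g : A → B) :
    relHammingDist (h ∘ f) (h ∘ g) = relHammingDist f g := by
  classical
  unfold relHammingDist
  congr 2
  exact hammingDist_comp (fun _ => h) fun _ => hh

theorem relHammingDist_comp_equiv [Fintype C] (e : C ≃ A) (f g : A → B) :
    relHammingDist (f ∘ e) (g ∘ e) = relHammingDist f g := by
  unfold relHammingDist hammingDist
  rw [Fintype.card_congr e]
  congr 2
  exact Finset.card_equiv e (by simp)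

theorem relHammingDist_prodMap_id [Fintype C] [Nonempty C] (f g : A → B) :
    relHammingDist (Prod.map f (id : C → C)) (Prod.map g id) = relHammingDist f g := by
  classical
  have hC : (Fintype.card C : ℝ) ≠ 0 := by exact_mod_cast Fintype.card_ne_zero
  have hprod : hammingDist (Prod.map f (id : C → C)) (Prod.map g id) =
      hammingDist f g * Fintype.card C := by
    rw [hammingDist, hammingDist, ← Finset.card_univ (α := C), ← Finset.card_product]
    congr 1
    ext
    simp [Prod.ext_iff]
  have hcancel := mul_div_mul_right (hammingDist f g : ℝ) (Fintype.card A) hC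
  unfold relHammingDist
  rw [← hcancel, Fintype.card_prod, ← Nat.cast_mul, ← Nat.cast_mul, ← hprod]
  congr!

theorem one_sub_relHammingDist [Nonempty A] (f g : A → B) [DecidablePred fun a => f a = g a] :
    1 - relHammingDist f g = (({a | f a = g a} : Finset A).dens : ℝ) := by
  have hcard := Finset.card_filter_add_card_filter_not (s := Finset.univ) fun a => f a = g a
  have hdist : relHammingDist f g = (({a | ¬ f a = g a} : Finset A).card : ℝ) / Fintype.card A := by
    unfold relHammingDist hammingDist
    congr!
  rw [Finset.nnratCast_dens, hdist, sub_eq_iff_eq_add, ← add_div,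
    eq_div_iff (by exact_mod_cast Fintype.card_ne_zero), one_mul]
  exact_mod_cast hcard.symm

theorem epsSimilar_iff_relHammingDist_le [Nonempty A] {ε : ℝ} {e f : A → A} :
    EpsSimilar ε e f ↔ relHammingDist e f ≤ ε := by
  classical
  have hA : (0 : ℝ) < Fintype.card A := by exact_mod_cast Fintype.card_pos
  rw [EpsSimilar, relHammingDist, div_le_iff₀ hA, Nat.card_eq_fintype_card, Fintype.card_subtype,
    hammingDist]

theorem relHammingDist_mul_le (σ σ' τ τ' : Perm A) :
    relHammingDist (σ * τ) (σ' * τ') ≤ relHammingDist σ σ' + relHammingDist τ τ' :=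
  calc relHammingDist (σ ∘ τ) (σ' ∘ τ')
    _ ≤ relHammingDist (σ ∘ τ) (σ' ∘ τ) + relHammingDist (σ' ∘ τ) (σ' ∘ τ') :=
        relHammingDist_triangle _ _ _
    _ = relHammingDist σ σ' + relHammingDist τ τ' := by
        rw [relHammingDist_comp_equiv, relHammingDist_comp_left σ'.injective]

end

/-- Given `e : C ≃ A × B`, the permutations of `A` act on `C` through the first coordinate of `e`.
This covers product actions as well as their conjugates. -/
def amplify (e : C ≃ A × B) : Perm A →* Perm C where
  toFun σ := e.symm.permCongr (σ.prodCongr (Equiv.refl B))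
  map_one' := by ext; simp
  map_mul' σ τ := by ext; simp [Prod.map]

theorem amplify_apply (e : C ≃ A × B) (σ : Perm A) (c : C) :
    amplify e σ c = e.symm (σ (e c).1, (e c).2) := rfl

theorem relHammingDist_amplify [Fintype A] [Finite B] [Fintype C] [Nonempty B] (e : C ≃ A × B)
    (σ τ : Perm A) : relHammingDist (amplify e σ) (amplify e τ) = relHammingDist σ τ := by
  have := Fintype.ofFinite B
  calc relHammingDist (e.symm ∘ Prod.map σ id ∘ e) (e.symm ∘ Prod.map τ id ∘ e)
    _ = relHammingDist (Prod.map σ (id : B → B)) (Prod.map τ id) := by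
        rw [relHammingDist_comp_left e.symm.injective, relHammingDist_comp_equiv]
    _ = relHammingDist σ τ := relHammingDist_prodMap_id _ _

theorem exists_perm_eqOn [Finite A] {f : A → A} {s : Set A} (hf : s.InjOn f) :
    ∃ π : Perm A, s.EqOn π f := by
  have := Fintype.ofFinite A
  obtain ⟨g, hg⟩ := Set.MapsTo.exists_equiv_extend_of_card_eq (t := Finset.univ)
    Finset.card_univ.symm (fun a _ => Finset.mem_coe.2 (Finset.mem_univ (f a))) hf
  exact ⟨g.trans (Equiv.subtypeUnivEquiv Finset.mem_univ), hg⟩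

end RelHammingDist

section SoficApproximation

variable {G : Type*} [Group G] {K K' : Type*} {l : Filter K} {l' : Filter K'}
  {A : K → Type*} [∀ k, Fintype (A k)] {C : K' → Type*} [∀ k, Fintype (C k)]

/-- A sofic approximation of `G` along a filter: maps from `G` to finite symmetric groups that are
asymptotically multiplicative and asymptotically free. Unlike `IsQuasiAction`, it uses
permutations and composes from right to left. -/
structure IsSoficApproximation (l : Filter K) (Φ : ∀ k, G → Perm (A k)) : Prop where
  tendsto_mul : ∀ g h,
    Tendsto (fun k => relHammingDist (Φ k (g * h)) (Φ k g * Φ k h)) l (𝓝 0)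
  tendsto_id : ∀ g, g ≠ 1 → Tendsto (fun k => relHammingDist (Φ k g) id) l (𝓝 1)

theorem IsSoficApproximation.of_isometric_hom {Φ : ∀ k, G → Perm (A k)}
    (hΦ : IsSoficApproximation l Φ) {m : K' → K} (hm : Tendsto m l' l)
    {Θ : ∀ k, G → Perm (C k)}
    (hΘ : ∀ᶠ k in l', ∃ ι : Perm (A (m k)) →* Perm (C k),
      (∀ σ τ, relHammingDist (ι σ) (ι τ) = relHammingDist σ τ) ∧ ∀ g, Θ k g = ι (Φ (m k) g)) :
    IsSoficApproximation l' Θ where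
  tendsto_mul g h := by
    refine ((hΦ.tendsto_mul g h).comp hm).congr' ?_
    filter_upwards [hΘ] with k ⟨ι, hι, hΘk⟩
    simp only [Function.comp_apply, hΘk, ← map_mul, hι]
  tendsto_id g hg := by
    refine ((hΦ.tendsto_id g hg).comp hm).congr' ?_
    filter_upwards [hΘ] with k ⟨ι, hι, hΘk⟩
    simpa only [Function.comp_apply, hΘk, map_one, Perm.coe_one] using (hι (Φ (m k) g) 1).symm

theorem tendsto_relHammingDist_one_of_mul {Φ : ∀ k, G → Perm (A k)}
    (hΦ : Tendsto (fun k => relHammingDist (Φ k (1 * 1)) (Φ k 1 * Φ k 1)) l (𝓝 0)) :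
    Tendsto (fun k => relHammingDist (Φ k 1) id) l (𝓝 0) := by
  refine hΦ.congr fun k => ?_
  rw [mul_one, relHammingDist_comm]
  exact relHammingDist_comp_left (Φ k 1).injective _ id

/-- Conjugation by `A ≃ Fin n` moves the action to the universe required by `IsSofic`, and
inversion exchanges the two orders of composition. -/
theorem IsSoficApproximation.isSofic [l.NeBot] [∀ k, Nonempty (A k)] {Φ : ∀ k, G → Perm (A k)}
    (hΦ : IsSoficApproximation l Φ) : IsSofic G := by
  intro F ε hε _
  have hmul : ∀ᶠ k in l, ∀ g ∈ F, ∀ h ∈ F,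
      relHammingDist (Φ k (h⁻¹ * g⁻¹)) (Φ k h⁻¹ * Φ k g⁻¹) < ε := by
    simp only [eventually_all_finset]
    exact fun g _ h _ => (hΦ.tendsto_mul _ _).eventually_lt_const hε
  have hone : ∀ᶠ k in l, relHammingDist (Φ k 1) id < ε :=
    (tendsto_relHammingDist_one_of_mul (hΦ.tendsto_mul 1 1)).eventually_lt_const hε
  have hfree : ∀ᶠ k in l, ∀ g ∈ F, g ≠ 1 → 1 - ε < relHammingDist (Φ k g⁻¹) id := by
    simp only [eventually_all_finset, eventually_imp_distrib_left]
    exact fun g _ hg =>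
      (hΦ.tendsto_id _ (inv_ne_one.2 hg)).eventually_const_lt (sub_lt_self 1 hε)
  obtain ⟨k, hmul, hone, hfree⟩ := (hmul.and (hone.and hfree)).exists
  let e := Fintype.equivFin (A k)
  have := e.symm.nonempty
  have hdist (f g : A k → A k) :
      relHammingDist (e ∘ f ∘ e.symm) (e ∘ g ∘ e.symm) = relHammingDist f g := by
    rw [relHammingDist_comp_left e.injective, relHammingDist_comp_equiv]
  have hid : e ∘ id ∘ e.symm = id := by simp
  refine ⟨Fin (Fintype.card (A k)), inferInstance, inferInstance,
    fun g => e ∘ Φ k g⁻¹ ∘ e.symm, fun g hg h hh => ?_, ?_, fun g hg hg1 => ?_⟩ <;>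
    rw [epsSimilar_iff_relHammingDist_le]
  · have hcomp : (fun x => (e ∘ Φ k h⁻¹ ∘ e.symm) ((e ∘ Φ k g⁻¹ ∘ e.symm) x)) =
        e ∘ (Φ k h⁻¹ * Φ k g⁻¹) ∘ e.symm := by ext; simp
    rw [hcomp, hdist, mul_inv_rev]
    exact (hmul g hg h hh).le
  · rw [← hid, hdist, inv_one]
    exact hone.le
  · rw [← hid, hdist, not_le]
    exact hfree g hg hg1

theorem exists_perm_relHammingDist_le {A : Type*} [Fintype A] (f f' : A → A) :
    ∃ π : Perm A, relHammingDist π f ≤ relHammingDist (f' ∘ f) id := by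
  classical
  have hinj : {a | f' (f a) = a}.InjOn f := fun a ha b hb hab =>
    ha.symm.trans ((congrArg f' hab).trans hb)
  obtain ⟨π, hπ⟩ := exists_perm_eqOn hinj
  refine ⟨π, ?_⟩
  refine div_le_div_of_nonneg_right (Nat.cast_le.2 (Finset.card_le_card ?_)) (Nat.cast_nonneg _)
  exact Finset.monotone_filter_right _ fun a _ hπa hfa => hπa (hπ hfa)

theorem IsSofic.exists_tendsto (hG : IsSofic G) :
    ∃ (A : Finset G × ℕ → Type) (_ : ∀ k, Fintype (A k)) (_ : ∀ k, Nonempty (A k))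
      (φ : ∀ k, G → A k → A k),
      (∀ g h, Tendsto (fun k => relHammingDist (φ k (g * h)) (φ k h ∘ φ k g)) atTop (𝓝 0)) ∧
      Tendsto (fun k => relHammingDist (φ k 1) id) atTop (𝓝 0) ∧
      ∀ g, g ≠ 1 → Tendsto (fun k => relHammingDist (φ k g) id) atTop (𝓝 1) := by
  classical
  have hpos (n : ℕ) : (0 : ℝ) < 1 / (n + 2) := by positivity
  have hlt (n : ℕ) : (1 : ℝ) / (n + 2) < 1 := by
    rw [div_lt_one (by positivity)]
    linarith [n.cast_nonneg (α := ℝ)]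
  choose A hA hA' φ hφ using fun k : Finset G × ℕ => hG k.1 _ (hpos k.2) (hlt k.2)
  simp only [IsQuasiAction, epsSimilar_iff_relHammingDist_le, not_le] at hφ
  have hsnd : Tendsto (fun k : Finset G × ℕ => (1 : ℝ) / (k.2 + 2)) atTop (𝓝 0) := by
    rw [← prod_atTop_atTop_eq]
    exact (tendsto_const_nhds.div_atTop
      (tendsto_atTop_add_const_right _ _ tendsto_natCast_atTop_atTop)).comp tendsto_snd
  have hmem (g : G) : ∀ᶠ k : Finset G × ℕ in atTop, g ∈ k.1 := by
    filter_upwards [eventually_ge_atTop (({g}, 0) : Finset G × ℕ)] with k hk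
    exact hk.1 (Finset.mem_singleton_self g)
  refine ⟨A, hA, hA', φ, fun g h => ?_, ?_, fun g hg => ?_⟩
  · refine squeeze_zero' (.of_forall fun k => relHammingDist_nonneg _ _) ?_ hsnd
    filter_upwards [hmem g, hmem h] with k hgk hhk using (hφ k).1 g hgk h hhk
  · exact squeeze_zero (fun k => relHammingDist_nonneg _ _) (fun k => (hφ k).2.1) hsnd
  · have hsub := hsnd.const_sub 1
    rw [sub_zero] at hsub
    refine tendsto_of_tendsto_of_tendsto_of_le_of_le' hsub tendsto_const_nhds ?_
      (.of_forall fun k => relHammingDist_le_one _ _)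
    filter_upwards [hmem g] with k hgk using ((hφ k).2.2 g hgk hg).le

theorem IsSofic.exists_isSoficApproximation (hG : IsSofic G) :
    ∃ (A : Finset G × ℕ → Type) (_ : ∀ k, Fintype (A k)) (_ : ∀ k, Nonempty (A k))
      (Φ : ∀ k, G → Perm (A k)), IsSoficApproximation atTop Φ := by
  obtain ⟨A, _, _, φ, hmul, hone, hfree⟩ := hG.exists_tendsto
  choose Φ hΦ using fun k g => exists_perm_relHammingDist_le (φ k g⁻¹) (φ k g)
  have hclose (g : G) : Tendsto (fun k => relHammingDist (Φ k g) (φ k g⁻¹)) atTop (𝓝 0) := by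
    have hinv := (hmul g⁻¹ g).add hone
    rw [inv_mul_cancel, add_zero] at hinv
    refine squeeze_zero (fun k => relHammingDist_nonneg _ _) (fun k => (hΦ k g).trans ?_) hinv
    rw [relHammingDist_comm (φ k 1)]
    exact relHammingDist_triangle _ _ _
  refine ⟨A, inferInstance, inferInstance, Φ, fun g h => ?_, fun g hg => ?_⟩
  · have hsum := (((hclose (g * h)).add (hmul h⁻¹ g⁻¹)).add (hclose h)).add (hclose g)
    simp only [add_zero] at hsum
    refine squeeze_zero (fun k => relHammingDist_nonneg _ _) (fun k => ?_) hsum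
    calc relHammingDist (Φ k (g * h)) (Φ k g ∘ Φ k h)
      _ ≤ relHammingDist (Φ k (g * h)) (φ k (g * h)⁻¹) +
            relHammingDist (φ k (g * h)⁻¹) (φ k g⁻¹ ∘ φ k h⁻¹) +
            relHammingDist (φ k g⁻¹ ∘ φ k h⁻¹) (φ k g⁻¹ ∘ Φ k h) +
            relHammingDist (φ k g⁻¹ ∘ Φ k h) (Φ k g ∘ Φ k h) := by
          linarith [relHammingDist_triangle (Φ k (g * h)) (φ k (g * h)⁻¹) (Φ k g ∘ Φ k h),
            relHammingDist_triangle (φ k (g * h)⁻¹) (φ k g⁻¹ ∘ φ k h⁻¹) (Φ k g ∘ Φ k h),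
            relHammingDist_triangle (φ k g⁻¹ ∘ φ k h⁻¹) (φ k g⁻¹ ∘ Φ k h) (Φ k g ∘ Φ k h)]
      _ ≤ _ := by
          rw [relHammingDist_comp_equiv, relHammingDist_comm _ (Φ k g : A k → A k), mul_inv_rev,
            relHammingDist_comm (Φ k h : A k → A k)]
          gcongr
          exact relHammingDist_comp_left_le _ _ _
  · have hdiff := (hfree g⁻¹ (inv_ne_one.2 hg)).sub (hclose g)
    rw [sub_zero] at hdiff
    refine tendsto_of_tendsto_of_tendsto_of_le_of_le hdiff tendsto_const_nhds (fun k => ?_)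
      fun k => relHammingDist_le_one _ _
    rw [sub_le_iff_le_add', relHammingDist_comm (Φ k g : A k → A k)]
    exact relHammingDist_triangle _ _ _

/-- At stage `(κ, s)`, with `s` a finite set of indices, every `G i` with `i ∈ s` acts on its own
coordinate of the product over `s` of the approximating sets. -/
theorem exists_isSoficApproximation_family.{u, v} {I : Type u} {G : I → Type v} [∀ i, Group (G i)]
    (hG : ∀ i, IsSofic (G i)) :
    ∃ (l : Filter ((∀ i, Finset (G i) × ℕ) × Finset I)) (_ : l.NeBot)
      (A : (∀ i, Finset (G i) × ℕ) × Finset I → Type u) (_ : ∀ k, Fintype (A k))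
      (_ : ∀ k, Nonempty (A k)) (Ψ : ∀ k i, G i → Perm (A k)),
      ∀ i, IsSoficApproximation l fun k => Ψ k i := by
  classical
  choose A _ _ Φ hΦ using fun i => (hG i).exists_isSoficApproximation
  refine ⟨Filter.pi (fun _ => atTop) ×ˢ atTop, inferInstance,
    fun k => ∀ j : k.2, A j (k.1 j), inferInstance, inferInstance,
    fun k i g => if hi : i ∈ k.2 then amplify (piSplitAt (⟨i, hi⟩ : k.2) _) (Φ i (k.1 i) g) else 1,
    fun i => (hΦ i).of_isometric_hom ((tendsto_eval_pi _ i).comp tendsto_fst) ?_⟩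
  filter_upwards [tendsto_snd.eventually (eventually_ge_atTop {i})] with k hk
  have hi : i ∈ k.2 := hk (Finset.mem_singleton_self i)
  exact ⟨amplify (piSplitAt (⟨i, hi⟩ : k.2) _), relHammingDist_amplify _, fun g => dif_pos hi⟩

end SoficApproximation

section ResiduallyFinite

theorem exists_perm_forall_mul_left_eq {G : Type*} [Mul G] [IsLeftCancelMul G] (S : Set G)
    [Finite S] (x : G) : ∃ π : Perm S, ∀ b c : S, x * b = c → π b = c := by
  classical
  let f (b : S) : S := if hb : x * b ∈ S then ⟨x * b, hb⟩ else b
  have hf {b : S} (hb : x * b ∈ S) : (f b : G) = x * b := by simp [f, hb]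
  have hinj : {b : S | x * b ∈ S}.InjOn f := fun b hb c hc hbc =>
    Subtype.ext (mul_left_cancel ((hf hb).symm.trans ((congrArg _ hbc).trans (hf hc))))
  obtain ⟨π, hπ⟩ := exists_perm_eqOn hinj
  refine ⟨π, fun b c hbc => ?_⟩
  have hb : x * b ∈ S := hbc ▸ c.2
  exact (hπ hb).trans (Subtype.ext ((hf hb).trans hbc))

theorem freeGroup_mk_cons {X : Type*} (x : X) (b : Bool) (w : List (X × Bool)) :
    FreeGroup.mk ((x, b) :: w) =
      cond b (FreeGroup.of x) (FreeGroup.of x)⁻¹ * FreeGroup.mk w := by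
  cases b <;> rfl

theorem freeGroup_mk_ne_one {X : Type*} {w : List (X × Bool)} (hw : FreeGroup.IsReduced w)
    (hne : w ≠ []) : FreeGroup.mk w ≠ 1 := by
  classical
  rwa [ne_eq, ← FreeGroup.toWord_eq_nil_iff, FreeGroup.toWord_mk, hw.reduce_eq]

theorem freeGroup_lift_mk_apply_one {X : Type*} {S : Set (FreeGroup X)} {π : X → Perm S}
    (hπ : ∀ (x : X) (b c : S), FreeGroup.of x * b = c → π x b = c) (h1 : 1 ∈ S)
    {w : List (X × Bool)} (hw : ∀ s, s <:+ w → FreeGroup.mk s ∈ S) :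
    (FreeGroup.lift π (FreeGroup.mk w) ⟨1, h1⟩ : FreeGroup X) = FreeGroup.mk w := by
  induction w with
  | nil => rfl
  | cons p w ih =>
    obtain ⟨x, b⟩ := p
    specialize ih fun s hs => hw s (hs.trans (List.suffix_cons _ _))
    let c : S := ⟨_, hw _ List.suffix_rfl⟩
    suffices FreeGroup.lift π (FreeGroup.mk ((x, b) :: w)) ⟨1, h1⟩ = c from congrArg _ this
    cases b with
    | true =>
      rw [freeGroup_mk_cons, map_mul, Perm.mul_apply, cond_true, FreeGroup.lift_apply_of]
      exact hπ _ _ _ (congrArg _ ih)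
    | false =>
      rw [freeGroup_mk_cons, map_mul, Perm.mul_apply, cond_false, map_inv,
        FreeGroup.lift_apply_of, Perm.inv_eq_iff_eq]
      exact (hπ _ _ _ ((mul_inv_cancel_left _ _).trans ih.symm)).symm

/-- Left multiplications by the generators, restricted to the finite set of suffixes of a word
`w` and extended to permutations of it, move `1` along the suffixes up to `w` itself. -/
instance freeGroup_residuallyFinite (X : Type*) : Group.ResiduallyFinite (FreeGroup X) := by
  refine Group.residuallyFinite_of_forall_exists_finite_monoidHom fun g hg => ?_
  obtain ⟨w, rfl⟩ := Quot.exists_rep g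
  let S : Set (FreeGroup X) := FreeGroup.mk '' {s | s <:+ w}
  have : Finite S := ((List.finite_toSet w.tails).subset fun s hs =>
    (List.mem_tails s w).2 hs).image _
  choose π hπ using fun x => exists_perm_forall_mul_left_eq S (FreeGroup.of x)
  have hsuffix (s) (hs : s <:+ w) : FreeGroup.mk s ∈ S := Set.mem_image_of_mem _ hs
  refine ⟨Perm S, inferInstance, inferInstance, FreeGroup.lift π, fun h => hg ?_⟩
  have hlift := freeGroup_lift_mk_apply_one hπ (hsuffix [] List.nil_suffix) hsuffix
  exact hlift.symm.trans (congrArg Subtype.val (DFunLike.congr_fun h _))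

theorem exists_finiteIndexNormalSubgroup_forall_notMem {G : Type*} [Group G]
    [Group.ResiduallyFinite G] (s : Finset G) (hs : 1 ∉ s) :
    ∃ N : FiniteIndexNormalSubgroup G, ∀ g ∈ s, g ∉ N := by
  classical
  induction s using Finset.induction_on with
  | empty => exact ⟨.ofSubgroup ⊤, by simp⟩
  | insert g s _ ih =>
    obtain ⟨N, hN⟩ := ih fun h => hs (Finset.mem_insert_of_mem h)
    obtain ⟨N', hN'⟩ := Group.exists_finiteIndexNormalSubgroup_notMem g
      fun h => hs (h ▸ Finset.mem_insert_self g s)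
    refine ⟨N' ⊓ N, Finset.forall_mem_insert .. |>.2 ⟨fun h => hN' ?_, fun x hx h => hN x hx ?_⟩⟩
    exacts [h.1, h.2]

end ResiduallyFinite

section WordPerm

variable {I : Type*} {G : I → Type*} {A : Type*}

/-- The permutation by which a word in letters from the `G i` acts on `A`. Word by word, it does
not require the maps `ψ i` to be multiplicative. -/
def wordPerm (ψ : ∀ i, G i → Perm A) (w : List (Σ i, G i)) : Perm A :=
  (w.map fun p => ψ p.1 p.2).prod

@[simp]
theorem wordPerm_nil (ψ : ∀ i, G i → Perm A) : wordPerm ψ [] = 1 := rfl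

@[simp]
theorem wordPerm_cons (ψ : ∀ i, G i → Perm A) (p : Σ i, G i) (w : List (Σ i, G i)) :
    wordPerm ψ (p :: w) = ψ p.1 p.2 * wordPerm ψ w := by
  simp [wordPerm]

@[simp]
theorem wordPerm_append (ψ : ∀ i, G i → Perm A) (v w : List (Σ i, G i)) :
    wordPerm ψ (v ++ w) = wordPerm ψ v * wordPerm ψ w := by
  simp [wordPerm]

variable {K : Type*} {l : Filter K} {C : K → Type*} [∀ k, Fintype (C k)]

/-- The congruence relating the elements of a monoid whose images under the homomorphisms `F k`
are asymptotically equal. It serves to check relations of a presentation on generators only. -/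
def asymptoticCon {M : Type*} [Monoid M] (l : Filter K) (F : ∀ k, M →* Perm (C k)) : Con M where
  r x y := Tendsto (fun k => relHammingDist (F k x) (F k y)) l (𝓝 0)
  iseqv :=
    { refl x := by simpa only [relHammingDist_self] using tendsto_const_nhds
      symm h := by simpa only [relHammingDist_comm] using h
      trans hxy hyz := squeeze_zero (fun _ => relHammingDist_nonneg _ _)
        (fun _ => relHammingDist_triangle _ _ _) (by simpa only [add_zero] using hxy.add hyz) }
  mul' hxy hzw := squeeze_zero (fun _ => relHammingDist_nonneg _ _)
    (fun k => by simpa only [map_mul] using relHammingDist_mul_le _ _ _ _)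
    (by simpa only [add_zero] using hxy.add hzw)

variable [∀ i, Group (G i)] {Θ : ∀ k i, G i → Perm (C k)}

theorem tendsto_relHammingDist_wordPerm
    (hΘ : ∀ i (g h : G i),
      Tendsto (fun k => relHammingDist (Θ k i (g * h)) (Θ k i g * Θ k i h)) l (𝓝 0))
    {v w : List (Σ i, G i)} (hvw : (v.map fun p => Monoid.CoprodI.of p.2).prod =
      (w.map fun p => Monoid.CoprodI.of p.2).prod) :
    Tendsto (fun k => relHammingDist (wordPerm (Θ k) v) (wordPerm (Θ k) w)) l (𝓝 0) := by
  let F (k : K) : FreeMonoid (Σ i, G i) →* Perm (C k) := FreeMonoid.lift fun p => Θ k p.1 p.2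
  have hle : conGen (Monoid.CoprodI.Rel G) ≤ asymptoticCon l F := by
    refine Con.conGen_le.2 fun x y hxy => ?_
    cases hxy with
    | of_one i => exact tendsto_relHammingDist_one_of_mul (hΘ i 1 1)
    | of_mul g h => exact (asymptoticCon l F).symm (hΘ _ g h)
  have hmk (u : List (Σ i, G i)) : (u.map fun p => Monoid.CoprodI.of p.2).prod =
      Con.mk' (conGen (Monoid.CoprodI.Rel G)) (FreeMonoid.ofList u) := by
    induction u with
    | nil => rfl
    | cons p u ih =>
      rw [List.map_cons, List.prod_cons, ih, FreeMonoid.ofList_cons, map_mul]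
      rfl
  rw [hmk, hmk] at hvw
  have hlim : Tendsto (fun k => relHammingDist (F k (FreeMonoid.ofList v))
      (F k (FreeMonoid.ofList w))) l (𝓝 0) := hle ((Con.eq _).1 hvw)
  simpa only [F, FreeMonoid.lift_ofList, wordPerm] using hlim

open Classical in
theorem isSoficApproximation_coprodI
    (hmul : ∀ i (g h : G i),
      Tendsto (fun k => relHammingDist (Θ k i (g * h)) (Θ k i g * Θ k i h)) l (𝓝 0))
    (hfree : ∀ w : Monoid.CoprodI.Word G, w ≠ Monoid.CoprodI.Word.empty →
      Tendsto (fun k => relHammingDist (wordPerm (Θ k) w.toList) id) l (𝓝 1)) :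
    IsSoficApproximation l fun k (x : Monoid.CoprodI G) =>
      wordPerm (Θ k) (Monoid.CoprodI.Word.equiv x).toList where
  tendsto_mul x y := by
    simp only [← wordPerm_append]
    refine tendsto_relHammingDist_wordPerm hmul ?_
    have hprod (z : Monoid.CoprodI G) :
        ((Monoid.CoprodI.Word.equiv z).toList.map fun p => Monoid.CoprodI.of p.2).prod = z :=
      Monoid.CoprodI.Word.equiv.symm_apply_apply z
    rw [List.map_append, List.prod_append, hprod, hprod, hprod]
  tendsto_id x hx := by
    refine hfree _ fun h => hx ?_
    rw [← Monoid.CoprodI.Word.equiv.symm_apply_apply x, h]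
    rfl

end WordPerm

section Twist

variable {I : Type*} {G : I → Type*} {A : Type*} (ψ : ∀ i, G i → Perm A)

/-- The word in the free group on `I × A` recorded along the path of the point `a` under `w`:
a step from `b` to `b'` by a letter from `G i` contributes `(i, b')⁻¹ (i, b)`. -/
def pathWord : List (Σ i, G i) → A → List ((I × A) × Bool)
  | [], _ => []
  | p :: w, a =>
    ((p.1, ψ p.1 p.2 (wordPerm ψ w a)), false) :: ((p.1, wordPerm ψ w a), true) :: pathWord w a

/-- Every step of the path of the point `a` under `w` moves the point. -/
def PathMoves : List (Σ i, G i) → A → Prop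
  | [], _ => True
  | p :: w, a => ψ p.1 p.2 (wordPerm ψ w a) ≠ wordPerm ψ w a ∧ PathMoves w a

variable {ψ}

theorem PathMoves.isReduced_pathWord {w : List (Σ i, G i)}
    (hw : w.IsChain fun p q => p.1 ≠ q.1) {a : A} (ha : PathMoves ψ w a) :
    FreeGroup.IsReduced (pathWord ψ w a) := by
  induction w with
  | nil => exact FreeGroup.IsReduced.nil
  | cons p w ih =>
    specialize ih hw.tail ha.2
    refine FreeGroup.isReduced_cons_cons.2 ⟨fun h => absurd (Prod.ext_iff.1 h).2 ha.1, ?_⟩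
    cases w with
    | nil => exact FreeGroup.IsReduced.singleton
    | cons q w =>
      have hpq := (List.isChain_cons_cons.1 hw).1
      exact FreeGroup.isReduced_cons_cons.2 ⟨fun h => absurd (Prod.ext_iff.1 h).1 hpq, ih⟩

theorem pathWord_ne_nil {w : List (Σ i, G i)} (hw : w ≠ []) (a : A) : pathWord ψ w a ≠ [] := by
  obtain ⟨p, w, rfl⟩ := List.exists_cons_of_ne_nil hw
  exact List.cons_ne_nil _ _

open Classical in
theorem dens_not_pathMoves_le [Fintype A] [Nonempty A] (w : List (Σ i, G i)) :
    (({a | ¬ PathMoves ψ w a} : Finset A).dens : ℝ) ≤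
      (w.map fun p => 1 - relHammingDist (ψ p.1 p.2) id).sum := by
  induction w with
  | nil => simp [PathMoves]
  | cons p w ih =>
    let σ := wordPerm ψ w
    have hsub : ({a | ¬ PathMoves ψ (p :: w) a} : Finset A) ⊆
        ({a | (ψ p.1 p.2 ∘ σ) a = (id ∘ σ) a} : Finset A) ∪ ({a | ¬ PathMoves ψ w a} : Finset A) :=
      fun a => by simp [PathMoves, σ, or_iff_not_imp_left]
    have hdens := (Finset.dens_le_dens hsub).trans (Finset.dens_union_le _ _)
    rw [List.map_cons, List.sum_cons, ← relHammingDist_comp_equiv σ, one_sub_relHammingDist]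
    exact le_trans (by exact_mod_cast hdens) (add_le_add_right ih _)

variable (ψ) in
theorem exists_finiteIndexNormalSubgroup_pathWord_notMem [Finite A] [∀ i, Group (G i)]
    (L : Finset (Monoid.CoprodI.Word G)) :
    ∃ N : FiniteIndexNormalSubgroup (FreeGroup (I × A)),
      ∀ w ∈ L, w ≠ Monoid.CoprodI.Word.empty → ∀ a, PathMoves ψ w.toList a →
        FreeGroup.mk (pathWord ψ w.toList a) ∉ N := by
  classical
  have := Fintype.ofFinite A
  obtain ⟨N, hN⟩ := exists_finiteIndexNormalSubgroup_forall_notMem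
    (((L ×ˢ Finset.univ).image fun x => FreeGroup.mk (pathWord ψ x.1.toList x.2)).erase 1)
    (Finset.notMem_erase 1 _)
  refine ⟨N, fun w hwL hw a ha => hN _ (Finset.mem_erase.2 ⟨?_, ?_⟩)⟩
  · exact freeGroup_mk_ne_one (ha.isReduced_pathWord w.chain_ne)
      (pathWord_ne_nil (fun h => hw (Monoid.CoprodI.Word.ext h)) a)
  · exact Finset.mem_image_of_mem _ (Finset.mk_mem_product hwL (Finset.mem_univ a))

variable {Q : Type*} [Group Q] (f : FreeGroup (I × A) →* Q)

/-- The shear `(a, q) ↦ (a, f (i, a) * q)`, by which `twist` conjugates the action of `G i`. -/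
def shear (i : I) : A × Q ≃ A × Q :=
  Equiv.prodShear (Equiv.refl A) fun a => Equiv.mulLeft (f (FreeGroup.of (i, a)))

variable (ψ) in
/-- The action of each `G i` on the first factor of `A × Q`, conjugated by `shear f i`. The shears
for distinct `i` are unrelated when `f` is close to injective, which makes the `G i` almost
free from each other. -/
def twist (i : I) (g : G i) : Perm (A × Q) :=
  amplify (shear f i) (ψ i g)

theorem wordPerm_twist_apply (w : List (Σ i, G i)) (a : A) (q : Q) :
    wordPerm (twist ψ f) w (a, q) =
      (wordPerm ψ w a, f (FreeGroup.mk (pathWord ψ w a)) * q) := by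
  induction w with
  | nil => simp [pathWord, ← FreeGroup.one_eq_mk]
  | cons p w ih =>
    rw [wordPerm_cons, Perm.mul_apply, ih, pathWord, freeGroup_mk_cons, freeGroup_mk_cons]
    simp [twist, amplify_apply, shear, mul_assoc]

theorem one_sub_relHammingDist_wordPerm_twist_le [Fintype A] [Nonempty A] [Fintype Q]
    {w : List (Σ i, G i)}
    (hf : ∀ a, PathMoves ψ w a → f (FreeGroup.mk (pathWord ψ w a)) ≠ 1) :
    1 - relHammingDist (wordPerm (twist ψ f) w) id ≤
      (w.map fun p => 1 - relHammingDist (ψ p.1 p.2) id).sum := by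
  classical
  rw [one_sub_relHammingDist]
  refine le_trans (NNRat.cast_le.2 ?_) (dens_not_pathMoves_le w)
  refine (Finset.dens_le_dens fun x hx => ?_).trans_eq (dens_product_univ (β := Q) _)
  obtain ⟨a, q⟩ := x
  rw [Finset.mem_filter_univ, wordPerm_twist_apply, id_eq, Prod.mk.injEq, mul_eq_right] at hx
  rw [Finset.mem_product, Finset.mem_filter_univ]
  exact ⟨fun ha => hf a ha hx.2, Finset.mem_univ q⟩

end Twist

theorem tendsto_wordPerm_twist {I K : Type*} {G : I → Type*} [∀ i, Group (G i)] {l : Filter K}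
    {A : K → Type*} [∀ k, Fintype (A k)] [∀ k, Nonempty (A k)] {Ψ : ∀ k i, G i → Perm (A k)}
    (hΨ : ∀ i, ∀ g : G i, g ≠ 1 → Tendsto (fun k => relHammingDist (Ψ k i g) id) l (𝓝 1))
    {Q : K → Type*} [∀ k, Group (Q k)] [∀ k, Fintype (Q k)]
    (f : ∀ k, FreeGroup (I × A k) →* Q k) (w : Monoid.CoprodI.Word G)
    (hf : ∀ᶠ k in l, ∀ a, PathMoves (Ψ k) w.toList a →
      f k (FreeGroup.mk (pathWord (Ψ k) w.toList a)) ≠ 1) :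
    Tendsto (fun k => relHammingDist (wordPerm (twist (Ψ k) (f k)) w.toList) id) l (𝓝 1) := by
  have hsum : Tendsto (fun k => (w.toList.map fun p => 1 - relHammingDist (Ψ k p.1 p.2) id).sum)
      l (𝓝 0) := by
    have h := tendsto_list_sum w.toList (f := fun p k => 1 - relHammingDist (Ψ k p.1 p.2) id)
      (a := fun _ => 0) (fun p hp => by simpa using (hΨ p.1 p.2 (w.ne_one p hp)).const_sub 1)
    simpa using h
  have hsub := hsum.const_sub 1
  rw [sub_zero] at hsub
  refine tendsto_of_tendsto_of_tendsto_of_le_of_le' hsub tendsto_const_nhds ?_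
    (.of_forall fun k => relHammingDist_le_one _ _)
  filter_upwards [hf] with k hfk
  rw [sub_le_comm]
  exact one_sub_relHammingDist_wordPerm_twist_le _ hfk

/-- The free product (coproduct in the category of groups) of an arbitrary family of sofic
groups is sofic. -/
theorem isSofic_coprodI {I : Type*} (G : I → Type*) [∀ i, Group (G i)]
    (h : ∀ i, IsSofic (G i)) : IsSofic (Monoid.CoprodI G) := by
  classical
  obtain ⟨l, _, A, _, _, Ψ, hΨ⟩ := exists_isSoficApproximation_family h
  choose N hN using fun k => exists_finiteIndexNormalSubgroup_pathWord_notMem (Ψ k) (G := G)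
  let Q (k) (L : Finset (Monoid.CoprodI.Word G)) := FreeGroup (I × A k) ⧸ (N k L).toSubgroup
  have : ∀ k L, Fintype (Q k L) := fun _ _ => Fintype.ofFinite _
  let f (k L) : FreeGroup (I × A k) →* Q k L := QuotientGroup.mk' _
  have hΨ' (i) : IsSoficApproximation (l ×ˢ atTop) fun x : _ × Finset _ =>
      twist (Ψ x.1) (f x.1 x.2) i :=
    (hΨ i).of_isometric_hom tendsto_fst <| .of_forall fun x =>
      ⟨amplify (shear (f x.1 x.2) i), relHammingDist_amplify _, fun g => rfl⟩
  have hfree (w : Monoid.CoprodI.Word G) (hw : w ≠ Monoid.CoprodI.Word.empty) :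
      Tendsto (fun x : _ × Finset _ => relHammingDist
        (wordPerm (twist (Ψ x.1) (f x.1 x.2)) w.toList) id) (l ×ˢ atTop) (𝓝 1) := by
    refine tendsto_wordPerm_twist (Ψ := fun x : _ × Finset _ => Ψ x.1)
      (fun i g hg => ((hΨ i).tendsto_id g hg).comp tendsto_fst) _ w ?_
    filter_upwards [tendsto_snd.eventually (eventually_ge_atTop {w})] with x hx a ha
    rw [ne_eq, QuotientGroup.mk'_apply, QuotientGroup.eq_one_iff]
    exact hN x.1 x.2 w (hx (Finset.mem_singleton_self w)) hw a ha
  exact (isSoficApproximation_coprodI (fun i => (hΨ' i).tendsto_mul) hfree).isSofic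
end

section
/- Every group satisfying the Følner condition is sofic. That is, if G is a group such that for every finite subset F ⊆ G and every real ε > 0 there exists a nonempty finite subset A ⊆ G with |A·g \ A| ≤ ε·|A| for all g ∈ F, then G is sofic. -/
/-- A group `M` satisfies the Følner condition (is amenable as a discrete group) if for every
finite `F ⊆ M` and every `ε > 0` there is a nonempty finite `A ⊆ M` with
`|A·g \ A| ≤ ε·|A|` for all `g ∈ F`. -/
def FolnerCondition (M : Type*) [Group M] : Prop :=
  ∀ (F : Finset M) (ε : ℝ), 0 < ε →
    ∃ A : Finset M, A.Nonempty ∧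
      ∀ g ∈ F, ((((fun a => a * g) '' (A : Set M)) \ (A : Set M)).ncard : ℝ) ≤ ε * A.card

/-! Let `A` be a Følner set for `F ∪ F * F` with constant `ε / 2`. Every `g` acts partially on `A`
by right multiplication; extend this to a self-map of `A` by fixing the points that `g` moves out
of `A`. The extended maps satisfy `a * (g * h) = (a * g) * h` unless `g` or `g * h` moves `a` out
of `A`. A nontrivial `g` has no fixed points in the group, so its extended map fixes only the points
that `g` moves out of `A`. The Følner condition makes all these exceptional points rare. -/

open scoped Pointwise

section Similarity

variable {A B : Type*} [Fintype A] [Fintype B] {ε : ℝ} {e f : A → A}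

theorem epsSimilar_iff_ncard_le :
    EpsSimilar ε e f ↔ ({a | e a ≠ f a}.ncard : ℝ) ≤ ε * Fintype.card A :=
  Iff.rfl

theorem EpsSimilar.refl (hε : 0 ≤ ε) (e : A → A) : EpsSimilar ε e e := by
  simpa [epsSimilar_iff_ncard_le] using mul_nonneg hε (Nat.cast_nonneg (Fintype.card A))

theorem not_epsSimilar_one_sub_iff :
    ¬ EpsSimilar (1 - ε) e f ↔ ({a | e a = f a}.ncard : ℝ) < ε * Fintype.card A := by
  have hcard : ({a | e a = f a}.ncard : ℝ) + {a | e a ≠ f a}.ncard = Fintype.card A := by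
    rw [← Nat.card_eq_fintype_card]
    exact_mod_cast Set.ncard_add_ncard_compl {a | e a = f a}
  rw [epsSimilar_iff_ncard_le, not_le]
  constructor <;> intro h <;> linarith

theorem epsSimilar_conj_iff (σ : A ≃ B) :
    EpsSimilar ε (σ.conj e) (σ.conj f) ↔ EpsSimilar ε e f := by
  have hpre : {b | σ.conj e b ≠ σ.conj f b} = σ.symm ⁻¹' {a | e a ≠ f a} := by
    ext b
    simp [Equiv.conj_apply]
  rw [epsSimilar_iff_ncard_le, epsSimilar_iff_ncard_le, hpre, ← σ.image_eq_preimage_symm,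
    Set.ncard_image_of_injective _ σ.injective, Fintype.card_congr σ]

theorem IsQuasiAction.conj {G : Type*} [Group G] {F : Finset G} {φ : G → A → A}
    (hφ : IsQuasiAction F ε φ) (σ : A ≃ B) : IsQuasiAction F ε fun g => σ.conj (φ g) := by
  obtain ⟨hmul, hone, hfree⟩ := hφ
  have hid : σ.conj id = id := σ.self_comp_symm
  refine ⟨fun g hg h hh => ?_, ?_, fun g hg hg1 => ?_⟩
  · have hcomp : (fun b => σ.conj (φ h) (σ.conj (φ g) b)) = σ.conj fun a => φ h (φ g a) :=
      (σ.conj_comp (φ h) (φ g)).symm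
    rw [hcomp, epsSimilar_conj_iff]
    exact hmul g hg h hh
  · rw [← hid, epsSimilar_conj_iff]
    exact hone
  · rw [← hid, epsSimilar_conj_iff]
    exact hfree g hg hg1

end Similarity

section TruncatedMultiplication

variable {M : Type*}

/-- The points of `A` which right multiplication by `g` moves out of `A`, as a set in the
subtype `A`. -/
def exitSet [Mul M] (A : Finset M) (g : M) : Set A :=
  {a | (a : M) * g ∉ A}

/-- Right multiplication by `g`, made into a self-map of `A` by fixing the points of
`exitSet A g`. -/
def truncMulRight [Mul M] [DecidableEq M] (A : Finset M) (g : M) (a : A) : A :=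
  if h : (a : M) * g ∈ A then ⟨a * g, h⟩ else a

theorem ncard_exitSet [Mul M] [IsRightCancelMul M] (A : Finset M) (g : M) :
    (exitSet A g).ncard = (((fun a => a * g) '' (A : Set M)) \ (A : Set M)).ncard := by
  have himage : ((fun a => a * g) '' (A : Set M)) \ (A : Set M) =
      (fun a : A => (a : M) * g) '' exitSet A g := by
    ext b
    constructor
    · rintro ⟨⟨a, ha, rfl⟩, hag⟩
      exact ⟨⟨a, ha⟩, hag, rfl⟩
    · rintro ⟨a, hag, rfl⟩
      exact ⟨⟨a, a.2, rfl⟩, hag⟩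
  rw [himage, Set.ncard_image_of_injective]
  exact (mul_left_injective g).comp Subtype.val_injective

variable [DecidableEq M] {A : Finset M} {g h : M}

theorem coe_truncMulRight_of_mul_mem [Mul M] {a : A} (ha : (a : M) * g ∈ A) :
    (truncMulRight A g a : M) = a * g := by
  simp [truncMulRight, ha]

theorem truncMulRight_one [MulOneClass M] : truncMulRight A 1 = id := by
  ext a
  simp [truncMulRight]

theorem setOf_truncMulRight_mul_ne_subset [Semigroup M] :
    {a | truncMulRight A (g * h) a ≠ truncMulRight A h (truncMulRight A g a)} ⊆
      exitSet A g ∪ exitSet A (g * h) := by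
  intro a hne
  by_contra hexit
  obtain ⟨hg, hgh⟩ : (a : M) * g ∈ A ∧ (a : M) * (g * h) ∈ A := by
    simpa [exitSet] using hexit
  have hcoe := coe_truncMulRight_of_mul_mem hg
  have hmem : (truncMulRight A g a : M) * h ∈ A := by rwa [hcoe, mul_assoc]
  refine hne (Subtype.ext ?_)
  rw [coe_truncMulRight_of_mul_mem hgh, coe_truncMulRight_of_mul_mem hmem, hcoe, mul_assoc]

theorem setOf_truncMulRight_eq_self_subset [MulOneClass M] [IsLeftCancelMul M] (hg : g ≠ 1) :
    {a | truncMulRight A g a = a} ⊆ exitSet A g := by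
  intro a hfix hag
  have hmul : (a : M) * g = a := by
    rw [← coe_truncMulRight_of_mul_mem hag, hfix]
  exact hg (mul_left_cancel (hmul.trans (mul_one (a : M)).symm))

end TruncatedMultiplication

theorem isQuasiAction_truncMulRight {G : Type*} [Group G] [DecidableEq G] {F A : Finset G} {ε : ℝ}
    (hε : 0 < ε) (hA : A.Nonempty)
    (hexit : ∀ g ∈ F ∪ F * F, ((exitSet A g).ncard : ℝ) ≤ ε / 2 * A.card) :
    IsQuasiAction F ε (truncMulRight A) := by
  refine ⟨fun g hg h hh => ?_, ?_, fun g hg hg1 => ?_⟩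
  · have hexit_g := hexit g (Finset.mem_union_left _ hg)
    have hexit_gh := hexit (g * h) (Finset.mem_union_right _ (Finset.mul_mem_mul hg hh))
    rw [epsSimilar_iff_ncard_le, Fintype.card_coe]
    calc ({a | truncMulRight A (g * h) a ≠ truncMulRight A h (truncMulRight A g a)}.ncard : ℝ)
      _ ≤ (exitSet A g ∪ exitSet A (g * h)).ncard := by
          exact_mod_cast Set.ncard_le_ncard setOf_truncMulRight_mul_ne_subset
      _ ≤ (exitSet A g).ncard + (exitSet A (g * h)).ncard := by
          exact_mod_cast Set.ncard_union_le _ _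
      _ ≤ ε * A.card := by linarith
  · rw [truncMulRight_one]
    exact EpsSimilar.refl hε.le id
  · have hcard : (0 : ℝ) < A.card := by exact_mod_cast hA.card_pos
    rw [not_epsSimilar_one_sub_iff, Fintype.card_coe]
    calc ({a | truncMulRight A g a = id a}.ncard : ℝ)
      _ ≤ (exitSet A g).ncard := by
          exact_mod_cast Set.ncard_le_ncard (setOf_truncMulRight_eq_self_subset hg1)
      _ ≤ ε / 2 * A.card := hexit g (Finset.mem_union_left _ hg)
      _ < ε * A.card := mul_lt_mul_of_pos_right (half_lt_self hε) hcard

/-- Every group satisfying the Følner condition (i.e., every amenable group) is sofic. -/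
theorem isSofic_of_folner {G : Type*} [Group G] (h : FolnerCondition G) : IsSofic G := by
  classical
  intro F ε hε _
  obtain ⟨A, hA, hfolner⟩ := h (F ∪ F * F) (ε / 2) (half_pos hε)
  have hexit : ∀ g ∈ F ∪ F * F, ((exitSet A g).ncard : ℝ) ≤ ε / 2 * A.card := fun g hg => by
    rw [ncard_exitSet]
    exact hfolner g hg
  have hquasi : IsQuasiAction F ε (truncMulRight A) := isQuasiAction_truncMulRight hε hA hexit
  have : Nonempty A := hA.to_subtype
  -- Soficity asks for a set in `Type`, whereas `A` lives in the universe of `G`.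
  exact ⟨Fin A.card, inferInstance, A.equivFin.symm.nonempty, _, hquasi.conj A.equivFin⟩
end

section
/- Every locally residually amenable group is sofic. That is, if G is a group such that every finitely generated subgroup of G is residually amenable, then G is sofic. -/
/-- A group is residually amenable if every nontrivial element survives in a homomorphism
to some group satisfying the Følner condition. -/
def ResiduallyAmenable (G : Type*) [Group G] : Prop :=
  ∀ g : G, g ≠ 1 → ∃ (M : Type) (_ : Group M), FolnerCondition M ∧ ∃ φ : G →* M, φ g ≠ 1

/-!
A finite subset `F` of a locally residually amenable group `G` generates a residually amenable
subgroup `H`. Finitely many elements of `H` are separated by a single homomorphism to an amenable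
group, because finite products of amenable groups are amenable. Extended arbitrarily to `G`, it is a
map to an amenable group `M` that is multiplicative and injective on `F`. Right translation by an
element of `M` almost preserves a suitable Følner set `A`; fixing the few points of `A` that would
leave it gives a quasi-action of `M`, which is pulled back to `G`.
-/

open Finset
open scoped Pointwise

section Similarity

variable {A : Type*} [Fintype A] {ε : ℝ} {e f : A → A} {S : Finset A}

theorem epsSimilar_iff_card_filter_ne [DecidableEq A] :
    EpsSimilar ε e f ↔ (#{a | e a ≠ f a} : ℝ) ≤ ε * Fintype.card A := by
  rw [EpsSimilar, Nat.card_eq_fintype_card, Fintype.card_subtype]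

theorem epsSimilar_of_eq_of_notMem (heq : ∀ a ∉ S, e a = f a)
    (hS : (#S : ℝ) ≤ ε * Fintype.card A) : EpsSimilar ε e f := by
  classical
  have hsub : ({a | e a ≠ f a} : Finset A) ⊆ S := fun a ha =>
    not_imp_comm.1 (heq a) ((mem_filter_univ a).1 ha)
  exact epsSimilar_iff_card_filter_ne.2 <| (Nat.cast_le.2 (card_le_card hsub)).trans hS

theorem not_epsSimilar_one_sub_of_ne_of_notMem (hne : ∀ a ∉ S, e a ≠ f a)
    (hS : (#S : ℝ) < ε * Fintype.card A) : ¬ EpsSimilar (1 - ε) e f := by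
  classical
  intro hsim
  have hcompl : (#Sᶜ : ℝ) ≤ (1 - ε) * Fintype.card A := by
    refine le_trans ?_ (epsSimilar_iff_card_filter_ne.1 hsim)
    exact_mod_cast card_le_card fun a ha =>
      (mem_filter_univ a).2 (hne a (mem_compl.1 ha))
  have htotal : (#S + #Sᶜ : ℝ) = Fintype.card A := by
    exact_mod_cast card_add_card_compl S
  linarith

theorem IsQuasiAction.comp {G M : Type*} [Group G] [Group M] [DecidableEq M] {F : Finset G}
    {ψ : G → M} {φ : M → A → A} (hφ : IsQuasiAction (F.image ψ) ε φ)
    (hmul : ∀ g ∈ F, ∀ h ∈ F, ψ (g * h) = ψ g * ψ h) (hone : ψ 1 = 1)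
    (hne : ∀ g ∈ F, g ≠ 1 → ψ g ≠ 1) : IsQuasiAction F ε (φ ∘ ψ) := by
  obtain ⟨hφmul, hφone, hφne⟩ := hφ
  refine ⟨fun g hg h hh => ?_, ?_, fun g hg hg1 =>
    hφne _ (mem_image_of_mem ψ hg) (hne g hg hg1)⟩
  · simpa only [Function.comp_apply, hmul g hg h hh] using
      hφmul _ (mem_image_of_mem ψ hg) _ (mem_image_of_mem ψ hh)
  · rwa [Function.comp_apply, hone]

end Similarity

section Translation

variable {M N : Type*} [DecidableEq M] [DecidableEq N]

/-- The points of `A` that leave `A` under right translation by `g`. Their number is `|A·g \ A|`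
and measures how far `A` is from being invariant. -/
def exitPoints [Mul M] (A : Finset M) (g : M) : Finset M := {a ∈ A | a * g ∉ A}

/-- Right translation by `g`, turned into a self-map of the finite set `A` by fixing the points
that would leave `A`. These maps form the quasi-action of an amenable group on a Følner set. -/
def truncatedTranslation [Mul M] (A : Finset M) (g : M) (a : A) : A :=
  if h : ↑a * g ∈ A then ⟨a * g, h⟩ else a

theorem notMem_exitPoints_iff [Mul M] {A : Finset M} {g : M} {a : A} :
    ↑a ∉ exitPoints A g ↔ ↑a * g ∈ A := by
  simp only [exitPoints, mem_filter, coe_mem, true_and, not_not]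

theorem coe_truncatedTranslation [Mul M] {A : Finset M} {g : M} {a : A} (h : ↑a * g ∈ A) :
    (truncatedTranslation A g a : M) = a * g := by
  rw [truncatedTranslation, dif_pos h]

theorem truncatedTranslation_one [MulOneClass M] (A : Finset M) :
    truncatedTranslation A 1 = id := by
  funext a
  simp only [truncatedTranslation, mul_one, coe_mem, dite_true, Subtype.coe_eta, id_eq]

theorem truncatedTranslation_mul [Semigroup M] {A : Finset M} {g h : M} {a : A}
    (hg : ↑a * g ∈ A) (hgh : ↑a * (g * h) ∈ A) :
    truncatedTranslation A (g * h) a = truncatedTranslation A h (truncatedTranslation A g a) := by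
  have hmem : ↑(truncatedTranslation A g a) * h ∈ A := by
    rwa [coe_truncatedTranslation hg, mul_assoc]
  refine Subtype.ext ?_
  rw [coe_truncatedTranslation hgh, coe_truncatedTranslation hmem, coe_truncatedTranslation hg,
    mul_assoc]

theorem truncatedTranslation_ne_self [Monoid M] [IsLeftCancelMul M] {A : Finset M} {g : M}
    (hg : g ≠ 1) {a : A} (ha : ↑a * g ∈ A) : truncatedTranslation A g a ≠ a := fun hfix =>
  hg <| mul_eq_left.1 <| (coe_truncatedTranslation ha).symm.trans (congrArg Subtype.val hfix)

theorem ncard_image_mul_right_sdiff [Mul M] [IsRightCancelMul M] (A : Finset M) (g : M) :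
    (((· * g) '' (A : Set M)) \ A).ncard = #(exitPoints A g) := by
  have himage : ((· * g) '' (A : Set M)) \ A = (exitPoints A g).image (· * g) := by
    ext x
    simp only [exitPoints, coe_image, coe_filter, Set.mem_sdiff, Set.mem_image, mem_coe,
      Set.mem_ofPred_eq]
    grind
  rw [himage, Set.ncard_coe_finset, card_image_of_injective _ (mul_left_injective g)]

theorem exitPoints_product_subset [Mul M] [Mul N] (A : Finset M) (B : Finset N) (g : M × N) :
    exitPoints (A ×ˢ B) g ⊆ exitPoints A g.1 ×ˢ B ∪ A ×ˢ exitPoints B g.2 := by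
  intro x hx
  simp only [exitPoints, mem_filter, mem_union, mem_product, Prod.fst_mul, Prod.snd_mul] at hx ⊢
  tauto

end Translation

namespace FolnerCondition

variable {M N : Type*} [Group M] [Group N]

theorem iff_card_exitPoints [DecidableEq M] :
    FolnerCondition M ↔ ∀ (F : Finset M) (ε : ℝ), 0 < ε →
      ∃ A : Finset M, A.Nonempty ∧ ∀ g ∈ F, (#(exitPoints A g) : ℝ) ≤ ε * #A := by
  simp only [FolnerCondition, ncard_image_mul_right_sdiff]

theorem of_finite [Finite M] : FolnerCondition M := by
  classical
  have := Fintype.ofFinite M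
  refine iff_card_exitPoints.2 fun F ε hε => ⟨univ, univ_nonempty, fun g _ => ?_⟩
  have hexit : exitPoints univ g = ∅ := by
    simp only [exitPoints, mem_univ, not_true_eq_false, filter_false]
  rw [hexit, card_empty, Nat.cast_zero]
  positivity

theorem prod (hM : FolnerCondition M) (hN : FolnerCondition N) : FolnerCondition (M × N) := by
  classical
  refine iff_card_exitPoints.2 fun F ε hε => ?_
  obtain ⟨A, hA, hAF⟩ := iff_card_exitPoints.1 hM (F.image Prod.fst) (ε / 2) (half_pos hε)
  obtain ⟨B, hB, hBF⟩ := iff_card_exitPoints.1 hN (F.image Prod.snd) (ε / 2) (half_pos hε)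
  refine ⟨A ×ˢ B, hA.product hB, fun g hg => ?_⟩
  have hcard : #(exitPoints (A ×ˢ B) g) ≤ #(exitPoints A g.1) * #B + #A * #(exitPoints B g.2) := by
    simpa only [card_product] using
      (card_le_card (exitPoints_product_subset A B g)).trans (card_union_le _ _)
  calc (#(exitPoints (A ×ˢ B) g) : ℝ)
    _ ≤ #(exitPoints A g.1) * #B + #A * #(exitPoints B g.2) := by exact_mod_cast hcard
    _ ≤ ε / 2 * #A * #B + #A * (ε / 2 * #B) := by
      gcongr
      · exact hAF _ (mem_image_of_mem _ hg)
      · exact hBF _ (mem_image_of_mem _ hg)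
    _ = ε * #(A ×ˢ B) := by
      rw [card_product]
      push_cast
      ring

theorem exists_isQuasiAction [DecidableEq M] (hM : FolnerCondition M) (F : Finset M) {ε : ℝ}
    (hε : 0 < ε) :
    ∃ A : Finset M, A.Nonempty ∧ IsQuasiAction F ε (truncatedTranslation A) := by
  obtain ⟨A, hA, hAF⟩ := iff_card_exitPoints.1 hM (F ∪ F * F) (ε / 2) (half_pos hε)
  let exits (g : M) : Finset A := (exitPoints A g).subtype (· ∈ A)
  have mul_mem_of_notMem {g : M} {a : A} (ha : a ∉ exits g) : ↑a * g ∈ A :=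
    notMem_exitPoints_iff.1 (mt mem_subtype.2 ha)
  have hexits {g : M} (hg : g ∈ F ∪ F * F) : (#(exits g) : ℝ) ≤ ε / 2 * Fintype.card A := by
    rw [card_subtype, Fintype.card_coe]
    exact (Nat.cast_le.2 (card_filter_le _ _)).trans (hAF g hg)
  refine ⟨A, hA, fun g hg h hh => ?_, ?_, fun g hg hg1 => ?_⟩
  · refine epsSimilar_of_eq_of_notMem (S := exits g ∪ exits (g * h)) (fun a ha => ?_) ?_
    · rw [notMem_union] at ha
      exact truncatedTranslation_mul (mul_mem_of_notMem ha.1) (mul_mem_of_notMem ha.2)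
    · calc (#(exits g ∪ exits (g * h)) : ℝ)
        _ ≤ #(exits g) + #(exits (g * h)) := by exact_mod_cast card_union_le _ _
        _ ≤ ε / 2 * Fintype.card A + ε / 2 * Fintype.card A :=
          add_le_add (hexits (mem_union_left _ hg))
            (hexits (mem_union_right _ (mul_mem_mul hg hh)))
        _ = ε * Fintype.card A := by ring
  · refine epsSimilar_of_eq_of_notMem (S := ∅) (fun a _ => ?_) ?_
    · rw [truncatedTranslation_one]
    · rw [card_empty, Nat.cast_zero]
      positivity
  · refine not_epsSimilar_one_sub_of_ne_of_notMem (S := exits g)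
      (fun a ha => truncatedTranslation_ne_self hg1 (mul_mem_of_notMem ha)) ?_
    have hcard : (0 : ℝ) < Fintype.card A := by
      rw [Fintype.card_coe]
      exact_mod_cast hA.card_pos
    calc (#(exits g) : ℝ)
      _ ≤ ε / 2 * Fintype.card A := hexits (mem_union_left _ hg)
      _ < ε * Fintype.card A := by gcongr; exact half_lt_self hε

end FolnerCondition

section InitiallySubamenable

variable {G : Type*} [Group G]

/-- A group is initially subamenable (locally embeddable into amenable groups) if each of its
finite subsets admits an injective map to an amenable group that preserves the products of its
elements. The map is encoded as a function on all of `G`, and the amenable group lives in `Type`,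
as in `ResiduallyAmenable`. -/
def InitiallySubamenable (G : Type*) [Group G] : Prop :=
  ∀ F : Finset G, ∃ (M : Type) (_ : Group M), FolnerCondition M ∧ ∃ φ : G → M,
    (∀ g ∈ F, ∀ h ∈ F, φ (g * h) = φ g * φ h) ∧ Set.InjOn φ F

theorem InitiallySubamenable.isSofic (hG : InitiallySubamenable G) : IsSofic G := by
  classical
  intro F ε hε _
  obtain ⟨M, _, hM, ψ, hmul, hinj⟩ := hG (insert 1 F)
  have hone : ψ 1 = 1 := by
    simpa only [mul_one, left_eq_mul] using hmul 1 (mem_insert_self 1 F) 1 (mem_insert_self 1 F)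
  have hne (g : G) (hg : g ∈ F) (hg1 : g ≠ 1) : ψ g ≠ 1 := fun hψg =>
    hg1 <| hinj (mem_insert_of_mem hg) (mem_insert_self 1 F) (hψg.trans hone.symm)
  obtain ⟨A, hA, hquasi⟩ := hM.exists_isQuasiAction (F.image ψ) hε
  exact ⟨A, inferInstance, hA.to_subtype, truncatedTranslation A ∘ ψ, hquasi.comp
    (fun g hg h hh => hmul g (mem_insert_of_mem hg) h (mem_insert_of_mem hh)) hone hne⟩

theorem ResiduallyAmenable.exists_hom_forall_ne_one (hG : ResiduallyAmenable G) {S : Finset G}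
    (hS : 1 ∉ S) : ∃ (M : Type) (_ : Group M), FolnerCondition M ∧
      ∃ φ : G →* M, ∀ g ∈ S, φ g ≠ 1 := by
  classical
  induction S using Finset.induction_on with
  | empty => exact ⟨Unit, inferInstance, .of_finite, 1, fun g hg => absurd hg (notMem_empty g)⟩
  | insert a S _ ih =>
    obtain ⟨ha, hS⟩ : 1 ≠ a ∧ 1 ∉ S := by rwa [mem_insert, not_or] at hS
    obtain ⟨M, _, hM, φ, hφ⟩ := ih hS
    obtain ⟨N, _, hN, ψ, hψ⟩ := hG a ha.symm
    refine ⟨M × N, inferInstance, hM.prod hN, φ.prod ψ, fun g hg hg1 => ?_⟩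
    obtain ⟨hφg, hψg⟩ := Prod.mk_eq_one.1 hg1
    obtain rfl | hgS := mem_insert.1 hg
    · exact hψ hψg
    · exact hφ g hgS hφg

theorem ResiduallyAmenable.exists_hom_injOn (hG : ResiduallyAmenable G) (S : Finset G) :
    ∃ (M : Type) (_ : Group M), FolnerCondition M ∧ ∃ φ : G →* M, Set.InjOn φ S := by
  classical
  obtain ⟨M, _, hM, φ, hφ⟩ := hG.exists_hom_forall_ne_one (notMem_erase 1 (S / S))
  refine ⟨M, _, hM, φ, fun g hg h hh hgh => ?_⟩
  by_contra hne
  refine hφ (g / h) (mem_erase.2 ⟨div_ne_one.2 hne, div_mem_div hg hh⟩) ?_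
  rw [map_div, hgh, div_self']

theorem initiallySubamenable_of_locally_residuallyAmenable
    (hG : ∀ H : Subgroup G, H.FG → ResiduallyAmenable H) : InitiallySubamenable G := by
  classical
  intro F
  let H : Subgroup G := Subgroup.closure F
  have hFH {g : G} (hg : g ∈ F) : g ∈ H := Subgroup.subset_closure hg
  obtain ⟨M, _, hM, ψ, hψ⟩ := (hG H ⟨F, rfl⟩).exists_hom_injOn (F.subtype (· ∈ H))
  let φ : G → M := Function.extend (↑) ψ 1
  have hφ (g : H) : φ g = ψ g := Subtype.val_injective.extend_apply ψ 1 g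
  refine ⟨M, _, hM, φ, fun g hg h hh => ?_, fun g hg h hh hgh => ?_⟩
  · lift g to H using hFH hg
    lift h to H using hFH hh
    rw [← Subgroup.coe_mul, hφ, hφ, hφ, map_mul]
  · lift g to H using hFH hg
    lift h to H using hFH hh
    rw [hφ, hφ] at hgh
    exact congrArg Subtype.val (hψ (mem_subtype.2 hg) (mem_subtype.2 hh) hgh)

end InitiallySubamenable

/-- Every locally residually amenable group (every finitely generated subgroup is residually
amenable) is sofic. -/
theorem isSofic_of_locally_residuallyAmenable {G : Type*} [Group G]
    (h : ∀ H : Subgroup G, H.FG → ResiduallyAmenable H) : IsSofic G :=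
  (initiallySubamenable_of_locally_residuallyAmenable h).isSofic
end
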